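/- arXiv:alg-geom/9701014 — 3 statements merged into one kernel-verified Lean document; each statement's English description precedes it below -/
import Mathlib

section
/- Let V₁ and V₂ be finite-dimensional left modules over the quaternion algebra ℍ, let U₁ ⊆ V₁ be an open connected neighborhood of 0, and let f : V₁ → V₂ be a map that is smooth (C^∞ over ℝ) on U₁, satisfies f(0) = 0, and whose ℝ-Fréchet derivative at every point x ∈ U₁ commutes with scalar multiplication by the quaternion units i and j (i.e. fderiv_ℝ f x (i • v) = i • fderiv_ℝ f x v and fderiv_ℝ f x (j • v) = j • fderiv_ℝ f x v for all v ∈ V₁). Then there exists an ℍ-linear map L : V₁ → V₂ such that f(x) = L(x) for all x ∈ U₁. -/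
/-- The quaternion unit `i`. -/
def Quaternion.unitI : Quaternion ℝ := ⟨0, 1, 0, 0⟩

/-- The quaternion unit `j`. -/
def Quaternion.unitJ : Quaternion ℝ := ⟨0, 0, 1, 0⟩


theorem qaux_smul_comm {V : Type*} [AddCommGroup V] [Module ℝ V]
    [Module (Quaternion ℝ) V] [IsScalarTower ℝ (Quaternion ℝ) V]
    (q : Quaternion ℝ) (r : ℝ) (v : V) : q • (r • v) = r • (q • v) := by
  have h : r • v = (r • (1 : Quaternion ℝ)) • v := by rw [smul_assoc, one_smul]
  rw [h, ← mul_smul, mul_smul_comm, mul_one, smul_assoc]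

theorem qaux_second {V₁ V₂ : Type*}
    [NormedAddCommGroup V₁] [NormedSpace ℝ V₁]
    [Module (Quaternion ℝ) V₁]
    [NormedAddCommGroup V₂] [NormedSpace ℝ V₂]
    [Module (Quaternion ℝ) V₂] [IsScalarTower ℝ (Quaternion ℝ) V₂]
    [FiniteDimensional ℝ V₂]
    (U : Set V₁) (hU : IsOpen U) (g : V₁ → V₁ →L[ℝ] V₂) (q : Quaternion ℝ)
    (h : ∀ x ∈ U, ∀ v : V₁, g x (q • v) = q • g x v)
    (x : V₁) (hx : x ∈ U) (B : V₁ →L[ℝ] V₁ →L[ℝ] V₂) (hB : HasFDerivAt g B x) (u v : V₁) :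
    B u (q • v) = q • B u v := by
  let A : V₂ →L[ℝ] V₂ := LinearMap.toContinuousLinearMap
    { toFun := fun w => q • w
      map_add' := fun a b => smul_add q a b
      map_smul' := fun r a => qaux_smul_comm q r a }
  have hA : ∀ w, A w = q • w := fun w => rfl
  have h1 : HasFDerivAt (fun y => g y (q • v)) ((ContinuousLinearMap.apply ℝ V₂ (q • v)).comp B) x :=
    (ContinuousLinearMap.apply ℝ V₂ (q • v)).hasFDerivAt.comp x hB
  have h2 : HasFDerivAt (fun y => A (g y v))
      (A.comp ((ContinuousLinearMap.apply ℝ V₂ v).comp B)) x :=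
    A.hasFDerivAt.comp x ((ContinuousLinearMap.apply ℝ V₂ v).hasFDerivAt.comp x hB)
  have h3 : (fun y => g y (q • v)) =ᶠ[nhds x] (fun y => A (g y v)) := by
    filter_upwards [hU.mem_nhds hx] with y hy
    rw [hA, h y hy v]
  have h4 := h1.unique (h2.congr_of_eventuallyEq h3)
  have h5 := congrArg (fun T : V₁ →L[ℝ] V₂ => T u) h4
  simpa [hA] using h5

theorem qaux_one_re : ((1 : Quaternion ℝ)).re = 1 := rfl
theorem qaux_one_imI : ((1 : Quaternion ℝ)).imI = 0 := rfl
theorem qaux_one_imJ : ((1 : Quaternion ℝ)).imJ = 0 := rfl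
theorem qaux_one_imK : ((1 : Quaternion ℝ)).imK = 0 := rfl
theorem qaux_zero_re : ((0 : Quaternion ℝ)).re = 0 := rfl
theorem qaux_zero_imI : ((0 : Quaternion ℝ)).imI = 0 := rfl
theorem qaux_zero_imJ : ((0 : Quaternion ℝ)).imJ = 0 := rfl
theorem qaux_zero_imK : ((0 : Quaternion ℝ)).imK = 0 := rfl
theorem qaux_I_re : Quaternion.unitI.re = 0 := rfl
theorem qaux_I_imI : Quaternion.unitI.imI = 1 := rfl
theorem qaux_I_imJ : Quaternion.unitI.imJ = 0 := rfl
theorem qaux_I_imK : Quaternion.unitI.imK = 0 := rfl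
theorem qaux_J_re : Quaternion.unitJ.re = 0 := rfl
theorem qaux_J_imI : Quaternion.unitJ.imI = 0 := rfl
theorem qaux_J_imJ : Quaternion.unitJ.imJ = 1 := rfl
theorem qaux_J_imK : Quaternion.unitJ.imK = 0 := rfl

theorem qaux_decomp (q : Quaternion ℝ) :
    q = q.re • (1 : Quaternion ℝ) + q.imI • Quaternion.unitI + q.imJ • Quaternion.unitJ
      + q.imK • (Quaternion.unitI * Quaternion.unitJ) := by
  apply Quaternion.ext <;> simp [qaux_one_re, qaux_one_imI, qaux_one_imJ, qaux_one_imK, qaux_zero_re, qaux_zero_imI, qaux_zero_imJ, qaux_zero_imK, qaux_I_re, qaux_I_imI, qaux_I_imJ, qaux_I_imK, qaux_J_re, qaux_J_imI, qaux_J_imJ, qaux_J_imK]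

theorem qaux_anti : Quaternion.unitJ * Quaternion.unitI
    = - (Quaternion.unitI * Quaternion.unitJ) := by
  apply Quaternion.ext <;> simp [qaux_one_re, qaux_one_imI, qaux_one_imJ, qaux_one_imK, qaux_zero_re, qaux_zero_imI, qaux_zero_imJ, qaux_zero_imK, qaux_I_re, qaux_I_imI, qaux_I_imJ, qaux_I_imK, qaux_J_re, qaux_J_imI, qaux_J_imJ, qaux_J_imK]

theorem qaux_ne : Quaternion.unitI * Quaternion.unitJ ≠ 0 := by
  intro h
  have := congrArg (fun q : Quaternion ℝ => q.imK) h
  simp [qaux_one_re, qaux_one_imI, qaux_one_imJ, qaux_one_imK, qaux_zero_re, qaux_zero_imI, qaux_zero_imJ, qaux_zero_imK, qaux_I_re, qaux_I_imI, qaux_I_imJ, qaux_I_imK, qaux_J_re, qaux_J_imI, qaux_J_imJ, qaux_J_imK] at this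

/-- Deligne's lemma: a smooth map between open neighbourhoods of `0`
in finite-dimensional quaternionic vector spaces, sending `0` to `0`, whose real
derivative everywhere commutes with scalar multiplication by the quaternion units
`i` and `j`, is the restriction of an ℍ-linear map. -/
theorem quaternionic_morphism_is_linear
    {V₁ V₂ : Type*}
    [NormedAddCommGroup V₁] [NormedSpace ℝ V₁]
    [Module (Quaternion ℝ) V₁] [IsScalarTower ℝ (Quaternion ℝ) V₁]
    [FiniteDimensional ℝ V₁]
    [NormedAddCommGroup V₂] [NormedSpace ℝ V₂]
    [Module (Quaternion ℝ) V₂] [IsScalarTower ℝ (Quaternion ℝ) V₂]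
    [FiniteDimensional ℝ V₂]
    (U₁ : Set V₁) (hU₁open : IsOpen U₁) (hU₁conn : IsConnected U₁)
    (hU₁zero : (0 : V₁) ∈ U₁)
    (f : V₁ → V₂)
    (hsmooth : ContDiffOn ℝ (⊤ : ℕ∞) f U₁)
    (hf0 : f 0 = 0)
    (hdI : ∀ x ∈ U₁, ∀ v : V₁,
      fderiv ℝ f x (Quaternion.unitI • v) = Quaternion.unitI • fderiv ℝ f x v)
    (hdJ : ∀ x ∈ U₁, ∀ v : V₁,
      fderiv ℝ f x (Quaternion.unitJ • v) = Quaternion.unitJ • fderiv ℝ f x v) :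
    ∃ L : V₁ →ₗ[Quaternion ℝ] V₂, ∀ x ∈ U₁, f x = L x := by
  have hder : ∀ x ∈ U₁, fderiv ℝ (fderiv ℝ f) x = 0 := by
    intro x hx
    have hc : ContDiffAt ℝ (⊤ : ℕ∞) f x := hsmooth.contDiffAt (hU₁open.mem_nhds hx)
    have hd : DifferentiableAt ℝ (fderiv ℝ f) x :=
      (hc.fderiv_right (m := 1) (by norm_cast)).differentiableAt (by norm_num)
    have hs : IsSymmSndFDerivAt ℝ f x := hc.isSymmSndFDerivAt (by simp; norm_cast)
    have hI := qaux_second U₁ hU₁open (fderiv ℝ f) _ hdI x hx _ hd.hasFDerivAt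
    have hJ := qaux_second U₁ hU₁open (fderiv ℝ f) _ hdJ x hx _ hd.hasFDerivAt
    ext u v
    have e1 := hJ (Quaternion.unitI • u) v
    rw [hs.eq (Quaternion.unitI • u) v, hI, hs.eq (Quaternion.unitI • u), ← mul_smul,
      qaux_anti] at e1
    have e2 := hI (Quaternion.unitJ • v) u
    rw [e1, hs.eq (Quaternion.unitJ • v) u, hJ, ← mul_smul, hs.eq u v, neg_smul] at e2
    rw [hs.eq u v]
    simp only [zero_apply]
    have : IsAddTorsionFree V₂ := .of_isTorsionFree ℝ V₂
    have e3 := self_eq_neg.mp e2.symm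
    exact (smul_eq_zero.mp e3).resolve_left qaux_ne
  have hdiff : DifferentiableOn ℝ f U₁ := hsmooth.differentiableOn (by simp)
  have hdiff2 : DifferentiableOn ℝ (fderiv ℝ f) U₁ :=
    (hsmooth.fderiv_of_isOpen hU₁open (m := 1) (by norm_cast)).differentiableOn (by norm_num)
  have hconst : ∀ x ∈ U₁, fderiv ℝ f x = fderiv ℝ f 0 := fun x hx =>
    hU₁open.is_const_of_fderiv_eq_zero hU₁conn.isPreconnected hdiff2
      (fun y hy => hder y hy) hx hU₁zero
  have heq : Set.EqOn f (fderiv ℝ f 0) U₁ :=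
    hU₁open.eqOn_of_fderiv_eq hU₁conn.isPreconnected hdiff
      (fderiv ℝ f 0).differentiable.differentiableOn
      (fun x hx => by rw [hconst x hx, ContinuousLinearMap.fderiv]) hU₁zero (by simp [hf0])
  refine ⟨{ toFun := fderiv ℝ f 0, map_add' := map_add _, map_smul' := ?_ }, fun x hx => heq hx⟩
  intro q v
  simp only [RingHom.id_apply]
  rw [qaux_decomp q]
  simp only [add_smul, smul_assoc, mul_smul, map_add, map_smul, one_smul, hdI 0 hU₁zero,
    hdJ 0 hU₁zero]
end

section
/- Let V and W be left modules over the quaternion algebra ℍ (in particular real vector spaces via the embedding ℝ ⊆ ℍ). Let H : V × V → W be a symmetric ℝ-bilinear map that is ℍ-linear in the first variable, i.e. H(q • x, y) = q • H(x, y) for all q ∈ ℍ and x, y ∈ V. Then H = 0. -/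
/-- A symmetric ℝ-bilinear map between left ℍ-modules which is
ℍ-linear in the first variable vanishes identically.  (The key "vanishing of the
Hessian" computation in the proof of Deligne's lemma.) -/
theorem symm_bilinear_quaternionic_linear_eq_zero
    {V W : Type*} [AddCommGroup V] [AddCommGroup W]
    [Module ℝ V] [Module ℝ W]
    [Module (Quaternion ℝ) V] [Module (Quaternion ℝ) W]
    [IsScalarTower ℝ (Quaternion ℝ) V] [IsScalarTower ℝ (Quaternion ℝ) W]
    (H : V →ₗ[ℝ] V →ₗ[ℝ] W)
    (hsymm : ∀ x y : V, H x y = H y x)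
    (hquat : ∀ (q : Quaternion ℝ) (x y : V), H (q • x) y = q • H x y) :
    H = 0 := by
  have hq2 : ∀ (q : Quaternion ℝ) (x y : V), H x (q • y) = q • H x y := by
    intro q x y
    rw [hsymm, hquat, hsymm]
  have hcomm : ∀ (p q : Quaternion ℝ) (x y : V), (p * q - q * p) • H x y = 0 := by
    intro p q x y
    rw [sub_smul, mul_smul, mul_smul, sub_eq_zero]
    rw [← hq2 q, ← hquat p, hq2 q, hquat p]
  obtain ⟨p, q, hne⟩ : ∃ p q : Quaternion ℝ, p * q - q * p ≠ 0 := by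
    have key : ∀ p q : Quaternion ℝ, (p * q - q * p).imK = 2 * (p.imI * q.imJ - p.imJ * q.imI) := by
      intro p q
      rw [Quaternion.imK_sub, Quaternion.imK_mul, Quaternion.imK_mul]
      ring
    refine ⟨⟨0, 1, 0, 0⟩, ⟨0, 0, 1, 0⟩, ?_⟩
    intro h
    have h1 := key ⟨0, 1, 0, 0⟩ ⟨0, 0, 1, 0⟩
    have h2 : (0 : ℝ) = 2 * (1 * 1 - 0 * 0) := (congrArg QuaternionAlgebra.imK h).symm.trans h1
    norm_num at h2
  ext x y
  have h := hcomm p q x y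
  simpa using (smul_eq_zero_iff_right hne).mp h
end

section
/- Let X be a topological space and let n ∈ ℕ. For each i ∈ {0, 1, …, n} let (X^i_m)_{m ∈ ℕ} be a descending chain of closed subsets of X with X^i_0 = X and such that X^i_m = ∅ for all sufficiently large m. For each m ∈ ℕ define the closed set Y_m = ⋃ { ⋂_{i=0}^{n} X^i_{m_i} : (m_0, …, m_n) ∈ ℕ^{n+1}, m_0 + ⋯ + m_n = m }. Then for every i and m, every irreducible component S of X^i_m is an irreducible component of Y_M for some M ∈ ℕ. -/
/-- the combinatorial-topological lemma of Section 4: given, for each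
`i ∈ {0, …, n}`, a descending chain of closed subsets `C i 0 = X ⊇ C i 1 ⊇ …` which
is eventually empty, every irreducible component `S` of some `C i m` is an
irreducible component of `Y M = ⋃ { ⋂ᵢ C i mᵢ : ∑ mᵢ = M }` for some `M`. -/
theorem irreducible_component_of_chain_is_component_of_sum
    {X : Type*} [TopologicalSpace X] (n : ℕ)
    (C : Fin (n + 1) → ℕ → Set X)
    (hclosed : ∀ i m, IsClosed (C i m))
    (hanti : ∀ i, Antitone (C i))
    (htop : ∀ i, C i 0 = Set.univ)
    (hempty : ∀ i, ∃ N, ∀ m ≥ N, C i m = ∅)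
    (Y : ℕ → Set X)
    (hY : ∀ m, Y m =
      ⋃ (f : Fin (n + 1) → ℕ) (_ : (∑ i, f i) = m), ⋂ i, C i (f i))
    (i : Fin (n + 1)) (m : ℕ) (S : Set X)
    (hSirr : IsIrreducible S) (hSsub : S ⊆ C i m)
    (hSmax : ∀ T : Set X, IsIrreducible T → T ⊆ C i m → S ⊆ T → T = S) :
    ∃ M : ℕ, S ⊆ Y M ∧
      ∀ T : Set X, IsIrreducible T → T ⊆ Y M → S ⊆ T → T = S := by
  classical
  have hmax : ∀ j, ∃ k, S ⊆ C j k ∧ ∀ l, S ⊆ C j l → l ≤ k := by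
    intro j
    obtain ⟨N, hN⟩ := hempty j
    have hb : ∀ l, S ⊆ C j l → l ≤ N := by
      intro l hl
      by_contra h
      obtain ⟨x, hx⟩ := hSirr.nonempty
      have hxl := hl hx
      rw [hN l (by omega)] at hxl
      exact hxl
    have h0 : S ⊆ C j 0 := by
      rw [htop j]
      exact Set.subset_univ S
    refine ⟨Nat.findGreatest (fun l => S ⊆ C j l) N, ?_, ?_⟩
    · exact Nat.findGreatest_spec (P := fun l => S ⊆ C j l) (Nat.zero_le N) h0
    · intro l hl
      exact Nat.le_findGreatest (hb l hl) hl
  choose μ hμ hμmax using hmax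
  refine ⟨∑ j, μ j, ?_, ?_⟩
  · rw [hY]
    intro x hx
    simp only [Set.mem_iUnion, Set.mem_iInter]
    exact ⟨μ, rfl, fun j => hμ j hx⟩
  · intro T hT hTY hST
    obtain ⟨z, hz, hTz⟩ := isIrreducible_iff_sUnion_isClosed.mp hT
      ((Finset.piAntidiag Finset.univ (∑ j, μ j)).image (fun f => ⋂ j, C j (f j)))
      (by
        intro z hz
        obtain ⟨f, -, rfl⟩ := Finset.mem_image.mp hz
        exact isClosed_iInter fun j => hclosed j _)
      (by
        intro x hx
        have hxY := hTY hx
        rw [hY] at hxY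
        simp only [Set.mem_iUnion] at hxY
        obtain ⟨f, hf, hxf⟩ := hxY
        refine ⟨_, Finset.mem_coe.mpr (Finset.mem_image.mpr ⟨f, ?_, rfl⟩), hxf⟩
        simp [Finset.mem_piAntidiag, hf])
    obtain ⟨f, hf, rfl⟩ := Finset.mem_image.mp hz
    have hsum : ∑ j, f j = ∑ j, μ j := (Finset.mem_piAntidiag.mp hf).1
    have hTC : ∀ j, T ⊆ C j (f j) := fun j => hTz.trans (Set.iInter_subset _ j)
    have hle : ∀ j ∈ Finset.univ, f j ≤ μ j := fun j _ => hμmax j _ (hST.trans (hTC j))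
    have heq := (Finset.sum_eq_sum_iff_of_le hle).mp hsum i (Finset.mem_univ i)
    refine hSmax T hT ((hTC i).trans (hanti i ?_)) hST
    rw [heq]
    exact hμmax i m hSsub
end
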